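/- Any two points of SO(3)×ℝ² can be joined by a curve satisfying the rolling constraint: for any (a₀,x₀,y₀) and (a₁,x₁,y₁) with a₀, a₁ ∈ SO(3) and (x₀,y₀), (x₁,y₁) ∈ ℝ², there exists a smooth curve (a,x,y) : [0,1] → M₃(ℝ)×ℝ×ℝ such that a(t) ∈ SO(3) for all t, (a(0),x(0),y(0)) = (a₀,x₀,y₀), (a(1),x(1),y(1)) = (a₁,x₁,y₁), and a'(t) = −M(x'(t),y'(t))·a(t) for all t ∈ [0,1]. -/

import Mathlib

open scoped Matrix

noncomputable section

/-- The skew-symmetric matrix `M(u,v)` with rows `(0,0,−u)`, `(0,0,−v)`, `(u,v,0)`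
appearing in the rolling constraint on `SO(3) × ℝ²`. -/
def rollM (u v : ℝ) : Matrix (Fin 3) (Fin 3) ℝ :=
  !![0, 0, -u; 0, 0, -v; u, v, 0]

/-- Membership of a real `3 × 3` matrix in `SO(3)`. -/
def IsRotation (a : Matrix (Fin 3) (Fin 3) ℝ) : Prop :=
  aᵀ * a = 1 ∧ a.det = 1

theorem IsRotation.mul {a b : Matrix (Fin 3) (Fin 3) ℝ} (ha : IsRotation a)
    (hb : IsRotation b) : IsRotation (a * b) := by
  refine ⟨?_, by rw [Matrix.det_mul, ha.2, hb.2, one_mul]⟩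
  rw [Matrix.transpose_mul, Matrix.mul_assoc, ← Matrix.mul_assoc aᵀ, ha.1, Matrix.one_mul, hb.1]

theorem IsRotation.transpose {a : Matrix (Fin 3) (Fin 3) ℝ} (ha : IsRotation a) :
    IsRotation aᵀ :=
  ⟨by rw [Matrix.transpose_transpose]; exact mul_eq_one_comm.mp ha.1,
    by rw [Matrix.det_transpose, ha.2]⟩

theorem rollM_zero : rollM 0 0 = 0 := by
  ext i j; fin_cases i <;> fin_cases j <;> simp [rollM]

theorem smul_rollM (k u v : ℝ) : rollM (k * u) (k * v) = k • rollM u v := by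
  ext i j; fin_cases i <;> fin_cases j <;> simp [rollM]

/-- The rotation `exp (-s M(c,d))` for a unit vector `(c,d)`. -/
def rollRot (c d s : ℝ) : Matrix (Fin 3) (Fin 3) ℝ :=
  !![1 - (1 - Real.cos s) * c ^ 2, -((1 - Real.cos s) * (c * d)), Real.sin s * c;
     -((1 - Real.cos s) * (c * d)), 1 - (1 - Real.cos s) * d ^ 2, Real.sin s * d;
     -(Real.sin s * c), -(Real.sin s * d), Real.cos s]

theorem isRotation_rollRot {c d : ℝ} (h : c ^ 2 + d ^ 2 = 1) (s : ℝ) :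
    IsRotation (rollRot c d s) := by
  have hs := Real.sin_sq_add_cos_sq s
  have hc : c ^ 2 = 1 - d ^ 2 := by linarith
  have hs' : Real.sin s ^ 2 = 1 - Real.cos s ^ 2 := by linarith
  constructor
  · ext i j
    fin_cases i <;> fin_cases j <;>
      simp [rollRot, Matrix.mul_apply, Fin.sum_univ_three] <;> grind
  · simp only [rollRot, Matrix.det_fin_three]
    simp
    grind

theorem rollRot_zero (c d : ℝ) : rollRot c d 0 = 1 := by
  ext i j; fin_cases i <;> fin_cases j <;> simp [rollRot]

theorem rollRot_nat_mul_two_pi (c d : ℝ) (n : ℕ) : rollRot c d (n * (2 * Real.pi)) = 1 := by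
  have h : Real.sin (n * (2 * Real.pi)) = 0 := by
    simpa using Real.sin_add_nat_mul_two_pi 0 n
  ext i j; fin_cases i <;> fin_cases j <;> simp [rollRot, h, Real.cos_nat_mul_two_pi]

theorem hasDerivAt_rollRot {c d : ℝ} (h : c ^ 2 + d ^ 2 = 1) (s : ℝ) (i j : Fin 3) :
    HasDerivAt (fun s => rollRot c d s i j) ((-(rollM c d * rollRot c d s)) i j) s := by
  have hcos := Real.hasDerivAt_cos s
  have hsin := Real.hasDerivAt_sin s
  have hmul (k : ℝ) : HasDerivAt (fun s => (1 - Real.cos s) * k) (Real.sin s * k) s := by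
    simpa using (hcos.const_sub 1).mul_const k
  fin_cases i <;> fin_cases j <;>
    simp [rollRot, rollM]
  · exact ((hmul (c ^ 2)).const_sub 1).congr_deriv (by ring)
  · exact ((hmul (c * d)).fun_neg).congr_deriv (by ring)
  · exact (hsin.mul_const c).congr_deriv (by ring)
  · exact ((hmul (c * d)).fun_neg).congr_deriv (by ring)
  · exact ((hmul (d ^ 2)).const_sub 1).congr_deriv (by ring)
  · exact (hsin.mul_const d).congr_deriv (by ring)
  · exact ((hsin.mul_const c).fun_neg).congr_deriv (by grind)
  · exact ((hsin.mul_const d).fun_neg).congr_deriv (by grind)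
  · exact hcos.congr_deriv (by grind)

theorem contDiff_rollRot (c d : ℝ) (i j : Fin 3) :
    ContDiff ℝ (⊤ : ℕ∞) fun s => rollRot c d s i j := by
  fin_cases i <;> fin_cases j <;> simp [rollRot] <;> fun_prop

theorem hasDerivAt_matrix_mul_apply {A B : ℝ → Matrix (Fin 3) (Fin 3) ℝ}
    {A' B' : Matrix (Fin 3) (Fin 3) ℝ} {t : ℝ}
    (hA : ∀ i j, HasDerivAt (fun s => A s i j) (A' i j) t)
    (hB : ∀ i j, HasDerivAt (fun s => B s i j) (B' i j) t) (i j : Fin 3) :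
    HasDerivAt (fun s => (A s * B s) i j) ((A' * B t + A t * B') i j) t := by
  simp only [Matrix.mul_apply, Matrix.add_apply, ← Finset.sum_add_distrib]
  exact HasDerivAt.fun_sum fun k _ => (hA i k).mul (hB k j)

theorem contDiff_matrix_mul_apply {A B : ℝ → Matrix (Fin 3) (Fin 3) ℝ}
    (hA : ∀ i j, ContDiff ℝ (⊤ : ℕ∞) fun s => A s i j)
    (hB : ∀ i j, ContDiff ℝ (⊤ : ℕ∞) fun s => B s i j) (i j : Fin 3) :
    ContDiff ℝ (⊤ : ℕ∞) fun s => (A s * B s) i j := by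
  simp only [Matrix.mul_apply]
  exact ContDiff.sum fun k _ => (hA i k).mul (hB k j)

theorem deriv_eq_zero_of_eq_const_on {f : ℝ → ℝ} {s : Set ℝ} {t k : ℝ}
    (hf : DifferentiableAt ℝ f t) (hs : UniqueDiffWithinAt ℝ s t) (ht : t ∈ s)
    (hk : ∀ r ∈ s, f r = k) : deriv f t = 0 := by
  rw [← hf.derivWithin hs, derivWithin_congr hk (hk t ht)]
  simp

/-- A smooth curve from `(1, 0, 0)` to `(g, p, q)` that satisfies the rolling constraint and
rests at its endpoints outside `(0, 1)`. -/
structure IsRollingCurve (a : ℝ → Matrix (Fin 3) (Fin 3) ℝ) (x y : ℝ → ℝ)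
    (g : Matrix (Fin 3) (Fin 3) ℝ) (p q : ℝ) : Prop where
  contDiff_a : ∀ i j, ContDiff ℝ (⊤ : ℕ∞) fun t => a t i j
  contDiff_x : ContDiff ℝ (⊤ : ℕ∞) x
  contDiff_y : ContDiff ℝ (⊤ : ℕ∞) y
  isRotation : ∀ t, IsRotation (a t)
  start : ∀ t ≤ 0, a t = 1 ∧ x t = 0 ∧ y t = 0
  finish : ∀ t ≥ 1, a t = g ∧ x t = p ∧ y t = q
  hasDerivAt : ∀ t i j, HasDerivAt (fun s => a s i j)
    ((-(rollM (deriv x t) (deriv y t) * a t)) i j) t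

namespace IsRollingCurve

variable {a b : ℝ → Matrix (Fin 3) (Fin 3) ℝ} {x y z w : ℝ → ℝ}
  {g h : Matrix (Fin 3) (Fin 3) ℝ} {p q r s : ℝ}

theorem differentiable_x (H : IsRollingCurve a x y g p q) : Differentiable ℝ x :=
  H.contDiff_x.differentiable (by simp)

theorem differentiable_y (H : IsRollingCurve a x y g p q) : Differentiable ℝ y :=
  H.contDiff_y.differentiable (by simp)

theorem deriv_of_nonpos (H : IsRollingCurve a x y g p q) {t : ℝ} (ht : t ≤ 0) :
    deriv x t = 0 ∧ deriv y t = 0 :=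
  ⟨deriv_eq_zero_of_eq_const_on (H.differentiable_x t) (uniqueDiffOn_Iic 0 t ht) ht
      fun r hr => (H.start r hr).2.1,
    deriv_eq_zero_of_eq_const_on (H.differentiable_y t) (uniqueDiffOn_Iic 0 t ht) ht
      fun r hr => (H.start r hr).2.2⟩

theorem deriv_of_one_le (H : IsRollingCurve a x y g p q) {t : ℝ} (ht : 1 ≤ t) :
    deriv x t = 0 ∧ deriv y t = 0 :=
  ⟨deriv_eq_zero_of_eq_const_on (H.differentiable_x t) (uniqueDiffOn_Ici 1 t ht) ht
      fun r hr => (H.finish r hr).2.1,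
    deriv_eq_zero_of_eq_const_on (H.differentiable_y t) (uniqueDiffOn_Ici 1 t ht) ht
      fun r hr => (H.finish r hr).2.2⟩

theorem concat (H : IsRollingCurve a x y g p q) (K : IsRollingCurve b z w h r s) :
    IsRollingCurve (fun t => b (2 * t - 1) * a (2 * t)) (fun t => z (2 * t - 1) + x (2 * t))
      (fun t => w (2 * t - 1) + y (2 * t)) (h * g) (r + p) (s + q) := by
  have hlin (t : ℝ) : HasDerivAt (fun t : ℝ => 2 * t) 2 t := by
    simpa using (hasDerivAt_id t).const_mul 2
  have hsum {f f' : ℝ → ℝ} (hf : Differentiable ℝ f) (hf' : Differentiable ℝ f') (t : ℝ) :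
      deriv (fun t => f (2 * t - 1) + f' (2 * t)) t
        = 2 * (deriv f (2 * t - 1) + deriv f' (2 * t)) := by
    have h1 := (hf (2 * t - 1)).hasDerivAt.comp t ((hlin t).sub_const 1)
    have h2 := (hf' (2 * t)).hasDerivAt.comp t (hlin t)
    have h3 := (h1.add h2).deriv
    rw [mul_add, mul_comm 2, mul_comm 2 (deriv f' _)]
    exact h3
  refine ⟨contDiff_matrix_mul_apply (fun i j => (K.contDiff_a i j).comp (by fun_prop))
      (fun i j => (H.contDiff_a i j).comp (by fun_prop)),
    (K.contDiff_x.comp (by fun_prop)).add (H.contDiff_x.comp (by fun_prop)),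
    (K.contDiff_y.comp (by fun_prop)).add (H.contDiff_y.comp (by fun_prop)),
    fun t => (K.isRotation _).mul (H.isRotation _), fun t ht => ?_, fun t ht => ?_,
    fun t i j => ?_⟩
  · obtain ⟨h1, h2, h3⟩ := H.start (2 * t) (by linarith)
    obtain ⟨h4, h5, h6⟩ := K.start (2 * t - 1) (by linarith)
    simp [h1, h2, h3, h4, h5, h6]
  · obtain ⟨h1, h2, h3⟩ := H.finish (2 * t) (by linarith)
    obtain ⟨h4, h5, h6⟩ := K.finish (2 * t - 1) (by linarith)
    simp [h1, h2, h3, h4, h5, h6]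
  · have hb (i j : Fin 3) : HasDerivAt (fun t => b (2 * t - 1) i j)
        (((2 : ℝ) • -(rollM (deriv z (2 * t - 1)) (deriv w (2 * t - 1)) * b (2 * t - 1))) i j)
        t := by
      have := (K.hasDerivAt (2 * t - 1) i j).comp t ((hlin t).sub_const 1)
      rw [Matrix.smul_apply, smul_eq_mul, mul_comm]
      exact this
    have ha (i j : Fin 3) : HasDerivAt (fun t => a (2 * t) i j)
        (((2 : ℝ) • -(rollM (deriv x (2 * t)) (deriv y (2 * t)) * a (2 * t))) i j) t := by
      have := (H.hasDerivAt (2 * t) i j).comp t (hlin t)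
      rw [Matrix.smul_apply, smul_eq_mul, mul_comm]
      exact this
    convert hasDerivAt_matrix_mul_apply hb ha i j using 2
    rw [hsum K.differentiable_x H.differentiable_x, hsum K.differentiable_y H.differentiable_y,
      smul_rollM]
    rcases le_total (2 * t) 1 with ht | ht
    · obtain ⟨h1, h2⟩ := K.deriv_of_nonpos (t := 2 * t - 1) (by linarith)
      obtain ⟨h3, -⟩ := K.start (2 * t - 1) (by linarith)
      simp [h1, h2, h3, rollM_zero]
    · obtain ⟨h1, h2⟩ := H.deriv_of_one_le ht
      simp [h1, h2, rollM_zero, Matrix.mul_assoc]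

end IsRollingCurve

/-- `(g, p, q)` is the endpoint of a rolling curve starting at `(1, 0, 0)`. -/
def RollReachable (g : Matrix (Fin 3) (Fin 3) ℝ) (p q : ℝ) : Prop :=
  ∃ a x y, IsRollingCurve a x y g p q

theorem RollReachable.mul {g h : Matrix (Fin 3) (Fin 3) ℝ} {p q r s : ℝ}
    (H : RollReachable h r s) (K : RollReachable g p q) :
    RollReachable (h * g) (r + p) (s + q) := by
  obtain ⟨a, x, y, H⟩ := H
  obtain ⟨b, z, w, K⟩ := K
  exact ⟨_, _, _, K.concat H⟩

/-- Rolling in a straight line. -/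
theorem rollReachable_rollRot {c d : ℝ} (h : c ^ 2 + d ^ 2 = 1) (l : ℝ) :
    RollReachable (rollRot c d l) (c * l) (d * l) := by
  have hσ : ContDiff ℝ (⊤ : ℕ∞) Real.smoothTransition := Real.smoothTransition.contDiff
  have hd (t : ℝ) : HasDerivAt Real.smoothTransition (deriv Real.smoothTransition t) t :=
    (hσ.differentiable (by simp) t).hasDerivAt
  have hl (t : ℝ) := (hd t).const_mul l
  refine ⟨fun t => rollRot c d (l * Real.smoothTransition t),
    fun t => c * (l * Real.smoothTransition t), fun t => d * (l * Real.smoothTransition t),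
    fun i j => (contDiff_rollRot c d i j).comp (contDiff_const.mul hσ),
    contDiff_const.mul (contDiff_const.mul hσ), contDiff_const.mul (contDiff_const.mul hσ),
    fun t => isRotation_rollRot h _, fun t ht => ?_, fun t ht => ?_, fun t i j => ?_⟩
  · simp [Real.smoothTransition.zero_of_nonpos ht, rollRot_zero]
  · simp [Real.smoothTransition.one_of_one_le ht]
  · have := (hasDerivAt_rollRot h (l * Real.smoothTransition t) i j).comp t (hl t)
    rw [((hl t).const_mul c).deriv, ((hl t).const_mul d).deriv, mul_comm c, mul_comm d,
      smul_rollM, Matrix.smul_mul, ← smul_neg, Matrix.smul_apply, smul_eq_mul, mul_comm]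
    exact this

/-- Polar coordinates. -/
theorem exists_polar (u v : ℝ) :
    ∃ r φ : ℝ, 0 ≤ r ∧ u = r * Real.cos φ ∧ v = r * Real.sin φ :=
  ⟨‖(⟨u, v⟩ : ℂ)‖, Complex.arg ⟨u, v⟩, norm_nonneg _,
    (Complex.norm_mul_cos_arg ⟨u, v⟩).symm, (Complex.norm_mul_sin_arg ⟨u, v⟩).symm⟩

/-- Every pure translation is a composition of two rolls by full turns. -/
theorem rollReachable_one (p q : ℝ) : RollReachable 1 p q := by
  obtain ⟨r, φ, hr, rfl, rfl⟩ := exists_polar p q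
  obtain ⟨n, hn⟩ := exists_nat_gt (r / (4 * Real.pi))
  have hpi := Real.pi_pos
  have hn0 : (0 : ℝ) < n := lt_of_le_of_lt (by positivity) hn
  have hlt : r < n * (4 * Real.pi) := (div_lt_iff₀ (by positivity)).mp hn
  have hcos : Real.cos (Real.arccos (r / (n * (4 * Real.pi)))) = r / (n * (4 * Real.pi)) :=
    Real.cos_arccos (le_trans (by norm_num) (div_nonneg hr (by positivity)))
      ((div_le_one (by positivity)).mpr hlt.le)
  set ψ := Real.arccos (r / (n * (4 * Real.pi)))
  have hr' : r = n * (4 * Real.pi) * Real.cos ψ := by rw [hcos]; field_simp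
  have key := (rollReachable_rollRot (Real.cos_sq_add_sin_sq (φ + ψ)) (n * (2 * Real.pi))).mul
    (rollReachable_rollRot (Real.cos_sq_add_sin_sq (φ - ψ)) (n * (2 * Real.pi)))
  rw [rollRot_nat_mul_two_pi, rollRot_nat_mul_two_pi, one_mul] at key
  convert key using 1
  · rw [hr', Real.cos_add, Real.cos_sub]; ring
  · rw [hr', Real.sin_add, Real.sin_sub]; ring

/-- `g` is the rotational part of some point reachable from `(1, 0, 0)`. -/
def RollRotReachable (g : Matrix (Fin 3) (Fin 3) ℝ) : Prop :=
  ∃ p q, RollReachable g p q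

theorem RollRotReachable.mul {g h : Matrix (Fin 3) (Fin 3) ℝ} (hg : RollRotReachable g)
    (hh : RollRotReachable h) : RollRotReachable (g * h) := by
  obtain ⟨p, q, hg⟩ := hg
  obtain ⟨r, s, hh⟩ := hh
  exact ⟨_, _, hg.mul hh⟩

theorem rollRotReachable_rollRot {c d : ℝ} (h : c ^ 2 + d ^ 2 = 1) (s : ℝ) :
    RollRotReachable (rollRot c d s) :=
  ⟨_, _, rollReachable_rollRot h s⟩

theorem rollRot_neg_mul_rollRot {c d : ℝ} (h : c ^ 2 + d ^ 2 = 1) (s : ℝ) :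
    rollRot c d (-s) * rollRot c d s = 1 := by
  have : rollRot c d (-s) = (rollRot c d s)ᵀ := by
    ext i j; fin_cases i <;> fin_cases j <;> simp [rollRot]
  rw [this]
  exact (isRotation_rollRot h s).1

theorem RollRotReachable.of_rollRot_mul {c d s : ℝ} {g : Matrix (Fin 3) (Fin 3) ℝ}
    (h : c ^ 2 + d ^ 2 = 1) (hg : RollRotReachable (rollRot c d s * g)) :
    RollRotReachable g := by
  have := (rollRotReachable_rollRot h (-s)).mul hg
  rwa [← Matrix.mul_assoc, rollRot_neg_mul_rollRot h, Matrix.one_mul] at this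

theorem exists_rotate_to_axis (u v : ℝ) : ∃ s : ℝ,
    Real.cos s * u + Real.sin s * v = 0 ∧ 0 ≤ -Real.sin s * u + Real.cos s * v := by
  obtain ⟨r, φ, hr, rfl, rfl⟩ := exists_polar v u
  refine ⟨-φ, ?_, ?_⟩
  · simp only [Real.cos_neg, Real.sin_neg]; ring
  · simp only [Real.cos_neg, Real.sin_neg]
    linarith [congrArg (r * ·) (Real.sin_sq_add_cos_sq φ)]

/-- Rotations about the vertical axis. -/
theorem rollRotReachable_of_col {g : Matrix (Fin 3) (Fin 3) ℝ} (hg : IsRotation g)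
    (h0 : g 0 2 = 0) (h1 : g 1 2 = 0) (h2 : 0 ≤ g 2 2) : RollRotReachable g := by
  have hcol (i j : Fin 3) := congrFun (congrFun hg.1 i) j
  have hg' : g * gᵀ = 1 := mul_eq_one_comm.mp hg.1
  have hrow (i j : Fin 3) := congrFun (congrFun hg' i) j
  have hdet := hg.2
  have e22 := hcol 2 2
  have e00 := hcol 0 0
  have e01 := hcol 0 1
  have r22 := hrow 2 2
  simp [Matrix.mul_apply, Fin.sum_univ_three, h0, h1] at e22 e00 e01 r22
  have g22 : g 2 2 = 1 := by nlinarith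
  have g20 : g 2 0 = 0 := by nlinarith
  have g21 : g 2 1 = 0 := by nlinarith
  simp [Matrix.det_fin_three, h0, h1, g20, g21, g22] at hdet e00 e01
  have g11 : g 1 1 = g 0 0 := by
    linear_combination g 1 0 * e01 + g 0 0 * hdet - g 1 1 * e00
  have g01 : g 0 1 = -g 1 0 := by
    linear_combination g 0 0 * e01 - g 1 0 * hdet - g 0 1 * e00
  obtain ⟨r, θ, hr, hc, hs⟩ := exists_polar (g 0 0) (g 1 0)
  have hr1 : r = 1 := by
    have : r ^ 2 = 1 := by
      rw [hc, hs] at e00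
      linear_combination e00 - r ^ 2 * Real.sin_sq_add_cos_sq θ
    nlinarith
  rw [hr1, one_mul] at hc hs
  have key := ((rollRotReachable_rollRot (c := 1) (d := 0) (by norm_num) (Real.pi / 2)).mul
    (rollRotReachable_rollRot (c := 0) (d := 1) (by norm_num) θ)).mul
    (rollRotReachable_rollRot (c := 1) (d := 0) (by norm_num) (-(Real.pi / 2)))
  convert key using 1
  ext i j
  fin_cases i <;> fin_cases j <;>
    simp [rollRot, Matrix.mul_apply, Fin.sum_univ_three, *]

/-- Rotations about horizontal axes generate `SO(3)`. -/
theorem IsRotation.rollRotReachable {g : Matrix (Fin 3) (Fin 3) ℝ} (hg : IsRotation g) :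
    RollRotReachable g := by
  have hx : (1 : ℝ) ^ 2 + 0 ^ 2 = 1 := by norm_num
  have hy : (0 : ℝ) ^ 2 + 1 ^ 2 = 1 := by norm_num
  obtain ⟨s, hs, -⟩ := exists_rotate_to_axis (g 1 2) (g 2 2)
  apply RollRotReachable.of_rollRot_mul hy (s := s)
  have hg' := (isRotation_rollRot hy s).mul hg
  have h12 : (rollRot 0 1 s * g) 1 2 = 0 := by
    simpa [rollRot, Matrix.mul_apply, Fin.sum_univ_three] using hs
  generalize rollRot 0 1 s * g = k at hg' h12 ⊢
  obtain ⟨s', hs', hpos⟩ := exists_rotate_to_axis (k 0 2) (k 2 2)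
  apply RollRotReachable.of_rollRot_mul hx (s := s')
  apply rollRotReachable_of_col ((isRotation_rollRot hx s').mul hg')
  · simpa [rollRot, Matrix.mul_apply, Fin.sum_univ_three] using hs'
  · simpa [rollRot, Matrix.mul_apply, Fin.sum_univ_three] using h12
  · simpa [rollRot, Matrix.mul_apply, Fin.sum_univ_three] using hpos

theorem IsRotation.rollReachable {g : Matrix (Fin 3) (Fin 3) ℝ} (hg : IsRotation g) (p q : ℝ) :
    RollReachable g p q := by
  obtain ⟨r, s, h⟩ := hg.rollRotReachable
  simpa using (rollReachable_one (p - r) (q - s)).mul h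

/-- Any two points of `SO(3) × ℝ²` can be joined by a smooth curve
satisfying the rolling constraint `a'(t) = −M(x'(t), y'(t)) · a(t)`. -/
theorem rolling_constraint_bracket_generating
    (a₀ a₁ : Matrix (Fin 3) (Fin 3) ℝ) (x₀ y₀ x₁ y₁ : ℝ)
    (h₀ : a₀ᵀ * a₀ = 1 ∧ a₀.det = 1) (h₁ : a₁ᵀ * a₁ = 1 ∧ a₁.det = 1) :
    ∃ (a : ℝ → Matrix (Fin 3) (Fin 3) ℝ) (x y : ℝ → ℝ),
      (∀ i j, ContDiff ℝ (⊤ : ℕ∞) fun t => a t i j) ∧ ContDiff ℝ (⊤ : ℕ∞) x ∧ ContDiff ℝ (⊤ : ℕ∞) y ∧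
      (∀ t : ℝ, (a t)ᵀ * a t = 1 ∧ (a t).det = 1) ∧
      (a 0 = a₀ ∧ x 0 = x₀ ∧ y 0 = y₀) ∧
      (a 1 = a₁ ∧ x 1 = x₁ ∧ y 1 = y₁) ∧
      (∀ t ∈ Set.Icc (0 : ℝ) 1, ∀ i j,
        HasDerivAt (fun s => a s i j)
          ((-(rollM (deriv x t) (deriv y t) * a t)) i j) t) := by
  have h₀' : IsRotation a₀ := h₀
  have h₁' : IsRotation a₁ := h₁
  obtain ⟨a, x, y, H⟩ := (h₁'.mul h₀'.transpose).rollReachable (x₁ - x₀) (y₁ - y₀)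
  obtain ⟨s1, s2, s3⟩ := H.start 0 le_rfl
  obtain ⟨f1, f2, f3⟩ := H.finish 1 le_rfl
  refine ⟨fun t => a t * a₀, fun t => x t + x₀, fun t => y t + y₀,
    contDiff_matrix_mul_apply H.contDiff_a fun i j => contDiff_const,
    H.contDiff_x.add contDiff_const, H.contDiff_y.add contDiff_const,
    fun t => (H.isRotation t).mul h₀', by simp [s1, s2, s3], ?_, fun t _ i j => ?_⟩
  · simp [f1, f2, f3, Matrix.mul_assoc, h₀.1]
  · have := hasDerivAt_matrix_mul_apply (H.hasDerivAt t) (B := fun _ => a₀) (B' := 0)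
      (fun i j => hasDerivAt_const t (a₀ i j)) i j
    simpa [Matrix.mul_assoc] using this

end
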